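/- arXiv:2211.10075 — 2 statements merged into one kernel-verified Lean document; each statement's English description precedes it below -/
import Mathlib

section
/- Let x ∈ ℝⁿ and let u = (u_0, …, u_{N−1}) be a control sequence whose predicted terminal state satisfies x̄_N ∈ X_f. Define x⁺ = f(x, u_0) and the shifted sequence u′ = (u_1, …, u_{N−1}, κ(x̄_N)). Then J(x⁺, u′) ≤ J(x, u) − (xᵀ Q x + u_0ᵀ R u_0). -/
/-!
The shifted trajectory retraces `x̄_1, …, x̄_N` (`mpcTraj_shift`) and ends in `f (x̄_N) (κ (x̄_N))`.
The stage costs at `x̄_1, …, x̄_{N-1}` therefore cancel between the two costs, and what is left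
is exactly the terminal decrease condition at `x̄_N`.
-/

open Matrix Finset

/-- Predicted trajectory of the discrete-time system `x⁺ = f(x,u)`:
`x̄_0 = x`, `x̄_{i+1} = f(x̄_i, u_i)`. -/
def mpcTraj {n m : ℕ} (f : (Fin n → ℝ) → (Fin m → ℝ) → (Fin n → ℝ))
    (x : Fin n → ℝ) (u : ℕ → Fin m → ℝ) : ℕ → Fin n → ℝ
  | 0 => x
  | i + 1 => f (mpcTraj f x u i) (u i)

/-- MPC cost `J(x,u) = Σ_{i=0}^{N−1} (x̄_iᵀ Q x̄_i + u_iᵀ R u_i) + x̄_Nᵀ P x̄_N`. -/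
noncomputable def mpcCost {n m : ℕ} (N : ℕ)
    (f : (Fin n → ℝ) → (Fin m → ℝ) → (Fin n → ℝ))
    (Q P : Matrix (Fin n) (Fin n) ℝ) (R : Matrix (Fin m) (Fin m) ℝ)
    (x : Fin n → ℝ) (u : ℕ → Fin m → ℝ) : ℝ :=
  ∑ i ∈ Finset.range N,
      (mpcTraj f x u i ⬝ᵥ Q *ᵥ mpcTraj f x u i + u i ⬝ᵥ R *ᵥ u i)
    + mpcTraj f x u N ⬝ᵥ P *ᵥ mpcTraj f x u N

/-- Along the shifted control sequence the trajectory from `f x (u 0)` is the original one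
advanced by one step, up to and including the index `N - 1`, where it reaches `x̄_N`. -/
lemma mpcTraj_shift {n m N : ℕ} (f : (Fin n → ℝ) → (Fin m → ℝ) → (Fin n → ℝ))
    (x : Fin n → ℝ) (u : ℕ → Fin m → ℝ) (c : Fin m → ℝ) (i : ℕ) (hi : i < N) :
    mpcTraj f (f x (u 0)) (fun j => if j + 1 < N then u (j + 1) else c) i
      = mpcTraj f x u (i + 1) := by
  induction i with
  | zero => rfl
  | succ k ih =>
    rw [mpcTraj, ih (by omega), if_pos hi]
    rfl

/-- **Cost-descent inequality** (inequality (42) in the proof of Theorem 2): if the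
terminal control law `κ` satisfies the terminal Lyapunov decrease condition on
`X_f = {x : xᵀ P x ≤ α}` and the predicted terminal state `x̄_N` of the sequence `u`
lies in `X_f`, then the shifted sequence `u' = (u_1,…,u_{N−1},κ(x̄_N))` from the
successor state `x⁺ = f(x,u_0)` satisfies `J(x⁺,u') ≤ J(x,u) − (xᵀ Q x + u_0ᵀ R u_0)`. -/
theorem mpc_shifted_cost_descent {n m N : ℕ} (hN : 1 ≤ N)
    (f : (Fin n → ℝ) → (Fin m → ℝ) → (Fin n → ℝ))
    (Q P : Matrix (Fin n) (Fin n) ℝ) (R : Matrix (Fin m) (Fin m) ℝ)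
    (hQ : Q.PosSemidef) (hR : R.PosSemidef) (hP : P.PosSemidef)
    (α : ℝ) (hα : 0 ≤ α)
    (κ : (Fin n → ℝ) → (Fin m → ℝ))
    (hκ : ∀ z : Fin n → ℝ, z ⬝ᵥ P *ᵥ z ≤ α →
      f z (κ z) ⬝ᵥ P *ᵥ f z (κ z) - z ⬝ᵥ P *ᵥ z
        ≤ -(z ⬝ᵥ Q *ᵥ z + κ z ⬝ᵥ R *ᵥ κ z))
    (x : Fin n → ℝ) (u : ℕ → Fin m → ℝ)
    (hterm : mpcTraj f x u N ⬝ᵥ P *ᵥ mpcTraj f x u N ≤ α) :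
    mpcCost N f Q P R (f x (u 0))
        (fun i => if i + 1 < N then u (i + 1) else κ (mpcTraj f x u N))
      ≤ mpcCost N f Q P R x u - (x ⬝ᵥ Q *ᵥ x + u 0 ⬝ᵥ R *ᵥ u 0) := by
  obtain ⟨M, rfl⟩ : ∃ M, N = M + 1 := ⟨N - 1, by omega⟩
  have hdec := hκ _ hterm
  set c := κ (mpcTraj f x u (M + 1)) with hc
  set v : ℕ → Fin m → ℝ := fun i => if i + 1 < M + 1 then u (i + 1) else c with hv
  have htraj : ∀ i < M + 1, mpcTraj f (f x (u 0)) v i = mpcTraj f x u (i + 1) :=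
    fun i hi => mpcTraj_shift f x u c i hi
  have hvM : v M = c := by simp [hv]
  have hend : mpcTraj f (f x (u 0)) v (M + 1) = f (mpcTraj f x u (M + 1)) c := by
    rw [mpcTraj, htraj M (by omega), hvM]
  have hsum : ∑ i ∈ Finset.range M, (mpcTraj f (f x (u 0)) v i ⬝ᵥ Q *ᵥ mpcTraj f (f x (u 0)) v i
        + v i ⬝ᵥ R *ᵥ v i)
      = ∑ i ∈ Finset.range M, (mpcTraj f x u (i + 1) ⬝ᵥ Q *ᵥ mpcTraj f x u (i + 1)
        + u (i + 1) ⬝ᵥ R *ᵥ u (i + 1)) := by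
    refine Finset.sum_congr rfl fun i hi => ?_
    have hiM : i < M := Finset.mem_range.mp hi
    have hvi : v i = u (i + 1) := if_pos (by omega)
    rw [htraj i (by omega), hvi]
  have hzero : mpcTraj f x u 0 = x := rfl
  -- The last stage is split off the shifted cost, the first stage off the original one.
  unfold mpcCost
  rw [Finset.sum_range_succ, hsum, htraj M (by omega), hvM, hend, Finset.sum_range_succ', hzero]
  linarith
end

section
/- If the control sequence u = (u_0, …, u_{N−1}) is feasible from x (i.e., u ∈ 𝒰(x)), then the optimal value at the successor state satisfies J*(f(x, u_0)) ≤ J(x, u) − (xᵀ Q x + u_0ᵀ R u_0). -/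
/-!
The proof uses the standard shifted candidate: drop `u 0` from the feasible sequence and append the
terminal control `κ (x̄_N)`. From `f x (u 0)` the candidate retraces `x̄_1, …, x̄_N`
(`mpcTraj_shift`) and ends at `f x̄_N (κ x̄_N)`. It is feasible because `X_f ⊆ X`, `κ` maps `X_f`
into the input box, and the Lyapunov decrease makes `X_f` invariant. Its cost is `J(x, u)` minus the
first stage cost, plus a terminal difference that the decrease condition makes nonpositive. Since
all costs are nonnegative (`mpcCost_nonneg`), the real infimum `J*` is bounded by this cost.
-/

open Matrix

/-- Feasible set `𝒰(x)`: sequences whose predicted states satisfy the state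
constraints `g(x̄_i) ≤ 0`, whose inputs satisfy `u_min ≤ u_i ≤ u_max` for
`i = 0,…,N−1`, and whose terminal state lies in `X_f = {x : xᵀ P x ≤ α}`. -/
def mpcFeasible {n m p : ℕ} (N : ℕ)
    (f : (Fin n → ℝ) → (Fin m → ℝ) → (Fin n → ℝ))
    (P : Matrix (Fin n) (Fin n) ℝ)
    (g : (Fin n → ℝ) → (Fin p → ℝ)) (umin umax : Fin m → ℝ) (α : ℝ)
    (x : Fin n → ℝ) : Set (ℕ → Fin m → ℝ) :=
  {u | (∀ i < N, g (mpcTraj f x u i) ≤ 0) ∧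
       (∀ i < N, umin ≤ u i ∧ u i ≤ umax) ∧
       mpcTraj f x u N ⬝ᵥ P *ᵥ mpcTraj f x u N ≤ α}

/-- Optimal value function `J*(x) = inf { J(x,u) : u ∈ 𝒰(x) }`. -/
noncomputable def mpcValue {n m p : ℕ} (N : ℕ)
    (f : (Fin n → ℝ) → (Fin m → ℝ) → (Fin n → ℝ))
    (Q P : Matrix (Fin n) (Fin n) ℝ) (R : Matrix (Fin m) (Fin m) ℝ)
    (g : (Fin n → ℝ) → (Fin p → ℝ)) (umin umax : Fin m → ℝ) (α : ℝ)
    (x : Fin n → ℝ) : ℝ :=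
  sInf (mpcCost N f Q P R x '' mpcFeasible N f P g umin umax α x)

/-- Inputs agreeing with the tail of `u` at the first `k` times reproduce the tail of the trajectory
up to time `k`. -/
theorem mpcTraj_shift_s8 {n m : ℕ} (f : (Fin n → ℝ) → (Fin m → ℝ) → (Fin n → ℝ))
    (x : Fin n → ℝ) (u v : ℕ → Fin m → ℝ) (k : ℕ) (h : ∀ i < k, v i = u (i + 1)) :
    ∀ i ≤ k, mpcTraj f (f x (u 0)) v i = mpcTraj f x u (i + 1) := by
  intro i
  induction i with
  | zero => intro _; rfl
  | succ i ih =>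
    intro hi
    rw [mpcTraj, ih (by omega), h i (by omega)]
    rfl

theorem mpcCost_nonneg {n m : ℕ} (N : ℕ)
    (f : (Fin n → ℝ) → (Fin m → ℝ) → (Fin n → ℝ))
    (Q P : Matrix (Fin n) (Fin n) ℝ) (R : Matrix (Fin m) (Fin m) ℝ)
    (hQ : Q.PosSemidef) (hR : R.PosSemidef) (hP : P.PosSemidef)
    (x : Fin n → ℝ) (u : ℕ → Fin m → ℝ) : 0 ≤ mpcCost N f Q P R x u := by
  have hq : ∀ z, 0 ≤ z ⬝ᵥ Q *ᵥ z := fun z => by simpa using hQ.dotProduct_mulVec_nonneg z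
  have hr : ∀ z, 0 ≤ z ⬝ᵥ R *ᵥ z := fun z => by simpa using hR.dotProduct_mulVec_nonneg z
  have hp : ∀ z, 0 ≤ z ⬝ᵥ P *ᵥ z := fun z => by simpa using hP.dotProduct_mulVec_nonneg z
  exact add_nonneg (Finset.sum_nonneg fun i _ => add_nonneg (hq _) (hr _)) (hp _)

/-- **Optimal value descent** (inequality (42) with the optimal value at the successor
state, proof of Theorem 2): under the terminal Lyapunov decrease condition, with `κ`
mapping `X_f` into `U` and `X_f ⊆ X`, any feasible `u ∈ 𝒰(x)` satisfies
`J*(f(x,u_0)) ≤ J(x,u) − (xᵀ Q x + u_0ᵀ R u_0)`. -/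
theorem mpc_value_descent {n m p N : ℕ} (hN : 1 ≤ N)
    (f : (Fin n → ℝ) → (Fin m → ℝ) → (Fin n → ℝ))
    (Q P : Matrix (Fin n) (Fin n) ℝ) (R : Matrix (Fin m) (Fin m) ℝ)
    (hQ : Q.PosSemidef) (hR : R.PosSemidef) (hP : P.PosSemidef)
    (g : (Fin n → ℝ) → (Fin p → ℝ)) (umin umax : Fin m → ℝ)
    (α : ℝ) (hα : 0 ≤ α)
    (hXfX : ∀ z : Fin n → ℝ, z ⬝ᵥ P *ᵥ z ≤ α → g z ≤ 0)
    (κ : (Fin n → ℝ) → (Fin m → ℝ))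
    (hκ : ∀ z : Fin n → ℝ, z ⬝ᵥ P *ᵥ z ≤ α →
      f z (κ z) ⬝ᵥ P *ᵥ f z (κ z) - z ⬝ᵥ P *ᵥ z
        ≤ -(z ⬝ᵥ Q *ᵥ z + κ z ⬝ᵥ R *ᵥ κ z))
    (hκU : ∀ z : Fin n → ℝ, z ⬝ᵥ P *ᵥ z ≤ α → umin ≤ κ z ∧ κ z ≤ umax)
    (x : Fin n → ℝ) (u : ℕ → Fin m → ℝ)
    (hu : u ∈ mpcFeasible N f P g umin umax α x) :
    mpcValue N f Q P R g umin umax α (f x (u 0))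
      ≤ mpcCost N f Q P R x u - (x ⬝ᵥ Q *ᵥ x + u 0 ⬝ᵥ R *ᵥ u 0) := by
  obtain ⟨k, rfl⟩ : ∃ k, N = k + 1 := ⟨N - 1, by omega⟩
  obtain ⟨hg, hU, hT⟩ := hu
  have hq : ∀ z, 0 ≤ z ⬝ᵥ Q *ᵥ z := fun z => by simpa using hQ.dotProduct_mulVec_nonneg z
  have hr : ∀ z, 0 ≤ z ⬝ᵥ R *ᵥ z := fun z => by simpa using hR.dotProduct_mulVec_nonneg z
  set z := mpcTraj f x u (k + 1) with hz
  -- The shifted candidate; only its values at times `0, …, k` matter.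
  let v : ℕ → Fin m → ℝ := fun i => if i < k then u (i + 1) else κ z
  have hv : ∀ i < k, v i = u (i + 1) := fun i hi => if_pos hi
  have hvk : v k = κ z := if_neg (lt_irrefl k)
  have htr := mpcTraj_shift_s8 f x u v k hv
  have htk : mpcTraj f (f x (u 0)) v k = z := htr k le_rfl
  have htN : mpcTraj f (f x (u 0)) v (k + 1) = f z (κ z) := by
    rw [mpcTraj, htk, hvk]
  have hdec := hκ z hT
  have hfeas : v ∈ mpcFeasible (k + 1) f P g umin umax α (f x (u 0)) := by
    refine ⟨fun i hi => ?_, fun i hi => ?_, ?_⟩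
    · rcases Nat.lt_succ_iff_lt_or_eq.mp hi with h | rfl
      · rw [htr i h.le]
        exact hg (i + 1) (by omega)
      · rw [htk]
        exact hXfX z hT
    · rcases Nat.lt_succ_iff_lt_or_eq.mp hi with h | rfl
      · rw [hv i h]
        exact hU (i + 1) (by omega)
      · rw [hvk]
        exact hκU z hT
    · rw [htN]
      linarith [hq z, hr (κ z)]
  have hbdd : BddBelow (mpcCost (k + 1) f Q P R (f x (u 0)) ''
      mpcFeasible (k + 1) f P g umin umax α (f x (u 0))) := by
    refine ⟨0, ?_⟩
    rintro _ ⟨w, _, rfl⟩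
    exact mpcCost_nonneg _ f Q P R hQ hR hP _ w
  refine (csInf_le hbdd ⟨v, hfeas, rfl⟩).trans ?_
  -- The stage costs of the candidate at times `0, …, k - 1` are those of `u` at `1, …, k`.
  have hsum : ∑ i ∈ Finset.range k,
      (mpcTraj f (f x (u 0)) v i ⬝ᵥ Q *ᵥ mpcTraj f (f x (u 0)) v i + v i ⬝ᵥ R *ᵥ v i)
      = ∑ i ∈ Finset.range k,
        (mpcTraj f x u (i + 1) ⬝ᵥ Q *ᵥ mpcTraj f x u (i + 1)
          + u (i + 1) ⬝ᵥ R *ᵥ u (i + 1)) := by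
    refine Finset.sum_congr rfl fun i hi => ?_
    have hi' := Finset.mem_range.mp hi
    rw [htr i hi'.le, hv i hi']
  have h0 : mpcTraj f x u 0 = x := rfl
  unfold mpcCost
  rw [Finset.sum_range_succ, hsum, htk, hvk, htN, Finset.sum_range_succ', h0, ← hz]
  linarith
end
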